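/- arXiv:2409.15203 — 6 statements merged into one kernel-verified Lean document; each statement's English description precedes it below -/
import Mathlib

section
/- Let Q be a 2D-embedded set (a finite set of points in ℝ² whose pairwise Euclidean distances are all at least 1), and let R = [a,b] × [c,d] be an axis-parallel closed rectangle with both side lengths at least 1 (i.e., b − a ≥ 1 and d − c ≥ 1). Then the number of points of Q lying in R is at most 6·(b − a)·(d − c), i.e., at most 6 times the area of R. -/
open MeasureTheory Metric

/-- The volume of an axis-parallel box in the Euclidean plane. -/
theorem volume_setOf_mem_Icc_prod (a b c d : ℝ) :
    volume {p : EuclideanSpace ℝ (Fin 2) | p 0 ∈ Set.Icc a b ∧ p 1 ∈ Set.Icc c d} =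
      ENNReal.ofReal (b - a) * ENNReal.ofReal (d - c) := by
  have hbox : {p : EuclideanSpace ℝ (Fin 2) | p 0 ∈ Set.Icc a b ∧ p 1 ∈ Set.Icc c d} =
      WithLp.ofLp ⁻¹' Set.Icc ![a, c] ![b, d] := by
    ext p
    simp [Pi.le_def, Fin.forall_fin_two]
    tauto
  rw [hbox, (PiLp.volume_preserving_ofLp (Fin 2)).measure_preimage
    measurableSet_Icc.nullMeasurableSet, Real.volume_Icc_pi]
  simp

/-- Each coordinate of a point in a Euclidean ball is close to that of the center. -/
theorem abs_apply_sub_le_of_mem_ball {ι : Type*} [Fintype ι] {p x : EuclideanSpace ℝ ι} {r : ℝ}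
    (hx : x ∈ ball p r) (i : ι) : |x i - p i| ≤ r := by
  have h := PiLp.norm_apply_le (x - p) i
  rw [← dist_eq_norm] at h
  exact h.trans (mem_ball.mp hx).le

/-- A 1-separated finite set of points in a box satisfies the packing
bound obtained from disjoint discs of radius `1 / 2` in the box thickened by `1 / 2`. -/
theorem card_mul_pi_div_four_le (S : Finset (EuclideanSpace ℝ (Fin 2)))
    (hS : ∀ p ∈ S, ∀ q ∈ S, p ≠ q → 1 ≤ dist p q)
    {a b c d : ℝ} (hab : a ≤ b) (hcd : c ≤ d)
    (hbox : ∀ p ∈ S, p 0 ∈ Set.Icc a b ∧ p 1 ∈ Set.Icc c d) :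
    (S.card : ℝ) * (Real.pi / 4) ≤ (b - a + 1) * (d - c + 1) := by
  have hdisj : (S : Set (EuclideanSpace ℝ (Fin 2))).PairwiseDisjoint (ball · (1 / 2)) :=
    fun p hp q hq hpq => ball_disjoint_ball (by linarith [hS p hp q hq hpq])
  have hsub : (⋃ p ∈ S, ball p (1 / 2)) ⊆ {p : EuclideanSpace ℝ (Fin 2) |
      p 0 ∈ Set.Icc (a - 1 / 2) (b + 1 / 2) ∧ p 1 ∈ Set.Icc (c - 1 / 2) (d + 1 / 2)} := by
    refine Set.iUnion₂_subset fun p hp x hx => ?_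
    obtain ⟨⟨ha, hb⟩, hc, hd⟩ := hbox p hp
    have h0 := abs_le.mp (abs_apply_sub_le_of_mem_ball hx 0)
    have h1 := abs_le.mp (abs_apply_sub_le_of_mem_ball hx 1)
    refine ⟨⟨?_, ?_⟩, ?_, ?_⟩ <;> linarith
  have hvol := measure_mono (μ := volume) hsub
  rw [measure_biUnion_finset hdisj fun p _ => measurableSet_ball,
    volume_setOf_mem_Icc_prod, ← ENNReal.ofReal_mul (by linarith)] at hvol
  have hball (p : EuclideanSpace ℝ (Fin 2)) :
      volume (ball p (1 / 2)) = ENNReal.ofReal (Real.pi / 4) := by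
    rw [EuclideanSpace.volume_ball_fin_two, ← ENNReal.ofReal_pow (by norm_num),
      ← ENNReal.ofReal_mul (by positivity)]
    ring_nf
  simp only [hball, Finset.sum_const, nsmul_eq_mul] at hvol
  rw [← ENNReal.ofReal_natCast, ← ENNReal.ofReal_mul (Nat.cast_nonneg _),
    ENNReal.ofReal_le_ofReal_iff (mul_nonneg (by linarith) (by linarith))] at hvol
  linarith

open scoped Classical

/-- A 2D-embedded set (finite set of points in ℝ² with pairwise Euclidean
distances at least 1) has at most `6 * area` points in any axis-parallel closed
rectangle whose side lengths are both at least 1. -/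
theorem embedded_points_in_rectangle_le_six_area
    (Q : Finset (EuclideanSpace ℝ (Fin 2)))
    (hQ : ∀ p ∈ Q, ∀ q ∈ Q, p ≠ q → 1 ≤ dist p q)
    (a b c d : ℝ) (hab : 1 ≤ b - a) (hcd : 1 ≤ d - c) :
    ((Q.filter (fun p => p 0 ∈ Set.Icc a b ∧ p 1 ∈ Set.Icc c d)).card : ℝ)
      ≤ 6 * (b - a) * (d - c) := by
  have hpack := card_mul_pi_div_four_le
    (Q.filter (fun p => p 0 ∈ Set.Icc a b ∧ p 1 ∈ Set.Icc c d))
    (fun p hp q hq => hQ p (Finset.mem_filter.mp hp).1 q (Finset.mem_filter.mp hq).1)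
    (by linarith) (by linarith) (fun p hp => (Finset.mem_filter.mp hp).2)
  generalize (Q.filter (fun p => p 0 ∈ Set.Icc a b ∧ p 1 ∈ Set.Icc c d)).card = n at hpack ⊢
  have hpi : (n : ℝ) * (3 / 4) ≤ n * (Real.pi / 4) := by
    gcongr
    exact Real.pi_gt_three.le
  nlinarith [mul_nonneg (sub_nonneg.mpr hab) (sub_nonneg.mpr hcd)]
end

section
/- (Tiling Lemma) Let X and Y be finite multisets of points in ℝ², and let w and ℓ be positive integers with w ≥ 4ℓ. Then there exists an offset (x,y) ∈ [0,w]² determining a grid tiling of ℝ² by w × w squares with vertex set {(x + aw, y + bw) : a, b ∈ ℤ} and whose edges lie on the vertical lines {x + aw} × ℝ and horizontal lines ℝ × {y + bw} (a, b ∈ ℤ), such that: (i) at most a (32ℓ²/w²)-fraction of the points of X (counted with multiplicity) are within ℓ∞-distance 2ℓ of some grid vertex, i.e., satisfy ∃ a, b ∈ ℤ with max(|p₁ − (x + aw)|, |p₂ − (y + bw)|) ≤ 2ℓ; and (ii) at most a (16ℓ/w)-fraction of the points of Y (counted with multiplicity) are within Euclidean distance 2ℓ of some grid edge, i.e., satisfy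 ∃ a ∈ ℤ with |p₁ − (x + aw)| ≤ 2ℓ or ∃ b ∈ ℤ with |p₂ − (y + bw)| ≤ 2ℓ. -/
open scoped Classical

/-- Two nonnegative functions whose averages are at most `a / 2` and `b / 2` are simultaneously
bounded by `a` and `b` at some point. -/
lemma exists_le_and_le_of_sum_le {ι : Type*} {S : Finset ι} (hS : S.Nonempty) {f g : ι → ℝ}
    {a b : ℝ} (ha : 0 ≤ a) (hb : 0 ≤ b) (hf : ∀ s, 0 ≤ f s) (hg : ∀ s, 0 ≤ g s)
    (hfa : ∑ s ∈ S, f s ≤ a / 2 * S.card) (hgb : ∑ s ∈ S, g s ≤ b / 2 * S.card) :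
    ∃ s ∈ S, f s ≤ a ∧ g s ≤ b := by
  have average_div_le : ∀ {h : ι → ℝ} {c : ℝ}, 0 ≤ c → ∑ s ∈ S, h s ≤ c / 2 * S.card →
      ∑ s ∈ S, h s / c ≤ S.card / 2 := by
    intro h c hc hsum
    rw [← Finset.sum_div]
    refine div_le_of_le_mul₀ hc (by positivity) ?_
    linarith
  have le_of_div_le : ∀ {h : ι → ℝ} {c : ℝ}, 0 ≤ c → (∀ s, 0 ≤ h s) →
      ∑ s ∈ S, h s ≤ c / 2 * S.card → ∀ s ∈ S, h s / c ≤ 1 → h s ≤ c := by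
    intro h c hc hh hsum s hs hle
    rcases hc.eq_or_lt with rfl | hc
    · have := Finset.single_le_sum (fun i _ => hh i) hs
      linarith
    · exact (div_le_one hc).1 hle
  obtain ⟨s, hs, hle⟩ : ∃ s ∈ S, f s / a + g s / b ≤ 1 := by
    refine Finset.exists_le_of_sum_le hS ?_
    rw [Finset.sum_add_distrib]
    have := average_div_le ha hfa
    have := average_div_le hb hgb
    simp only [Finset.sum_const, nsmul_eq_mul, mul_one]
    linarith
  have hfs := div_nonneg (hf s) ha
  have hgs := div_nonneg (hg s) hb
  exact ⟨s, hs, le_of_div_le ha hf hfa s hs (by linarith),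
    le_of_div_le hb hg hgb s hs (by linarith)⟩

lemma sum_card_filter_le {ι α : Type*} (S : Finset ι) (P : ι → α → Prop)
    [∀ s, DecidablePred (P s)] [∀ p, DecidablePred (P · p)] (c : ℕ)
    (X : Multiset α) (h : ∀ p ∈ X, (S.filter (P · p)).card ≤ c) :
    ∑ s ∈ S, (X.filter (P s)).card ≤ c * X.card := by
  induction X using Multiset.induction_on with
  | empty => simp
  | cons p X ih =>
    have hX := ih fun q hq => h q (Multiset.mem_cons_of_mem hq)
    have hp := h p (Multiset.mem_cons_self p X)
    have hsplit : ∀ s, ((p ::ₘ X).filter (P s)).card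
        = (if P s p then 1 else 0) + (X.filter (P s)).card := by
      intro s
      by_cases hs : P s p <;> simp [hs, add_comm]
    simp only [hsplit, Finset.sum_add_distrib, ← Finset.card_filter, Multiset.card_cons]
    linarith

lemma card_filter_product_or_le {α β : Type*} (A : Finset α) (B : Finset β) (P : α → Prop)
    (Q : β → Prop) [DecidablePred P] [DecidablePred Q]
    [DecidablePred fun s : α × β => P s.1 ∨ Q s.2] :
    ((A ×ˢ B).filter fun s => P s.1 ∨ Q s.2).card
      ≤ (A.filter P).card * B.card + A.card * (B.filter Q).card := by
  have hsub : ((A ×ˢ B).filter fun s => P s.1 ∨ Q s.2) ⊆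
      (A.filter P ×ˢ B) ∪ (A ×ˢ B.filter Q) := by
    intro s hs
    simp only [Finset.mem_filter, Finset.mem_product, Finset.mem_union] at hs ⊢
    tauto
  refine (Finset.card_le_card hsub).trans ((Finset.card_union_le _ _).trans ?_)
  rw [Finset.card_product, Finset.card_product]

/-- Some point of the one-dimensional grid `δ + i + wℤ` lies within distance `2ℓ` of `t`. -/
def NearGrid (w ℓ : ℕ) (δ t : ℝ) (i : ℕ) : Prop :=
  ∃ a : ℤ, |t - (δ + i + a * w)| ≤ 2 * ℓ

/-- Among the integer shifts modulo `w` of a grid of points missing `t` modulo `1`, at most `4ℓ`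
have a point within distance `2ℓ` of `t`. -/
lemma card_filter_near_le {w ℓ : ℕ} {t δ : ℝ} (ht : Int.fract t ≠ Int.fract δ) :
    ((Finset.range w).filter (NearGrid w ℓ δ t)).card ≤ 4 * ℓ := by
  have hsub : (Finset.range w).filter (NearGrid w ℓ δ t) ⊆
      (Finset.Icc (⌊t - δ⌋ - 2 * ℓ + 1) (⌊t - δ⌋ + 2 * ℓ)).image
        fun m : ℤ => (m % (w : ℤ)).toNat := by
    intro i hi
    obtain ⟨hiw, a, ha⟩ := Finset.mem_filter.1 hi
    rw [Finset.mem_range] at hiw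
    obtain ⟨hlo, hhi⟩ := abs_le.1 ha
    have hfl := Int.floor_le (t - δ)
    have hfl' := Int.lt_floor_add_one (t - δ)
    have hne : (⌊t - δ⌋ : ℝ) ≠ t - δ := fun h =>
      ht (Int.fract_eq_fract.2 ⟨⌊t - δ⌋, h.symm⟩)
    have hlt := lt_of_le_of_ne hfl hne
    refine Finset.mem_image.2 ⟨i + a * w, Finset.mem_Icc.2 ⟨?_, ?_⟩, ?_⟩
    · have : ((⌊t - δ⌋ - 2 * ℓ : ℤ) : ℝ) < ((i + a * w : ℤ) : ℝ) := by
        push_cast; linarith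
      have := Int.cast_lt.1 this
      omega
    · have : ((i + a * w : ℤ) : ℝ) < ((⌊t - δ⌋ + 2 * ℓ + 1 : ℤ) : ℝ) := by
        push_cast; linarith
      have := Int.cast_lt.1 this
      omega
    · simp only [Int.add_mul_emod_self_right]
      rw [Int.emod_eq_of_lt (by omega) (by omega)]
      simp
  calc _ ≤ _ := Finset.card_le_card hsub
    _ ≤ _ := Finset.card_image_le
    _ = 4 * ℓ := by rw [Int.card_Icc]; omega

lemma sum_card_filter_near_and_le {w ℓ : ℕ} {δ : ℝ} {X : Multiset (ℝ × ℝ)}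
    (hfst : ∀ p ∈ X, Int.fract p.1 ≠ Int.fract δ) (hsnd : ∀ p ∈ X, Int.fract p.2 ≠ Int.fract δ) :
    ∑ s ∈ Finset.range w ×ˢ Finset.range w,
      (X.filter fun p => NearGrid w ℓ δ p.1 s.1 ∧ NearGrid w ℓ δ p.2 s.2).card
      ≤ (4 * ℓ * (4 * ℓ)) * X.card := by
  refine sum_card_filter_le _ (fun (s : ℕ × ℕ) p => NearGrid w ℓ δ p.1 s.1 ∧ NearGrid w ℓ δ p.2 s.2)
    _ X fun p hp => ?_
  rw [Finset.filter_product, Finset.card_product]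
  exact Nat.mul_le_mul (card_filter_near_le (hfst p hp)) (card_filter_near_le (hsnd p hp))

lemma sum_card_filter_near_or_le {w ℓ : ℕ} {δ : ℝ} {X : Multiset (ℝ × ℝ)}
    (hfst : ∀ p ∈ X, Int.fract p.1 ≠ Int.fract δ) (hsnd : ∀ p ∈ X, Int.fract p.2 ≠ Int.fract δ) :
    ∑ s ∈ Finset.range w ×ˢ Finset.range w,
      (X.filter fun p => NearGrid w ℓ δ p.1 s.1 ∨ NearGrid w ℓ δ p.2 s.2).card
      ≤ (4 * ℓ * w + w * (4 * ℓ)) * X.card := by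
  refine sum_card_filter_le _ (fun (s : ℕ × ℕ) p => NearGrid w ℓ δ p.1 s.1 ∨ NearGrid w ℓ δ p.2 s.2)
    _ X fun p hp => ?_
  refine (card_filter_product_or_le _ _ _ _).trans ?_
  rw [Finset.card_range]
  exact Nat.add_le_add (Nat.mul_le_mul_right _ (card_filter_near_le (hfst p hp)))
    (Nat.mul_le_mul_left _ (card_filter_near_le (hsnd p hp)))

/-- **Tiling Lemma.** For finite multisets `X, Y` of points in ℝ² and positive
integers `w ≥ 4ℓ`, there is an offset `(x, y) ∈ [0,w]²` for the width-`w` grid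
tiling such that at most a `32ℓ²/w²`-fraction of the points of `X` are within
ℓ∞-distance `2ℓ` of a grid vertex, and at most a `16ℓ/w`-fraction of the points
of `Y` are within distance `2ℓ` of a grid edge. -/
theorem tiling_lemma (X Y : Multiset (ℝ × ℝ)) (w ℓ : ℕ)
    (hw : 0 < w) (hℓ : 0 < ℓ) (hwl : 4 * ℓ ≤ w) :
    ∃ x y : ℝ, x ∈ Set.Icc (0 : ℝ) w ∧ y ∈ Set.Icc (0 : ℝ) w ∧
      ((X.filter (fun p =>
          ∃ a b : ℤ, max |p.1 - (x + a * w)| |p.2 - (y + b * w)| ≤ 2 * ℓ)).card : ℝ)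
        ≤ (32 * ℓ ^ 2 / w ^ 2) * X.card ∧
      ((Y.filter (fun p =>
          (∃ a : ℤ, |p.1 - (x + a * w)| ≤ 2 * ℓ) ∨
          (∃ b : ℤ, |p.2 - (y + b * w)| ≤ 2 * ℓ))).card : ℝ)
        ≤ (16 * ℓ / w) * Y.card := by
  obtain ⟨δ, hδ, hδX⟩ : ∃ δ ∈ Set.Ico (0 : ℝ) 1, δ ∉
      (((X + Y).toFinset.image fun p => Int.fract p.1) ∪
        ((X + Y).toFinset.image fun p => Int.fract p.2) : Finset ℝ) :=
    (Set.Ico_infinite (zero_lt_one' ℝ)).exists_notMem_finset _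
  have hfract : Int.fract δ = δ := Int.fract_eq_self.2 hδ
  have hfst : ∀ p ∈ X + Y, Int.fract p.1 ≠ Int.fract δ := by
    intro p hp h
    exact hδX (Finset.mem_union_left _
      (Finset.mem_image.2 ⟨p, Multiset.mem_toFinset.2 hp, h.trans hfract⟩))
  have hsnd : ∀ p ∈ X + Y, Int.fract p.2 ≠ Int.fract δ := by
    intro p hp h
    exact hδX (Finset.mem_union_right _
      (Finset.mem_image.2 ⟨p, Multiset.mem_toFinset.2 hp, h.trans hfract⟩))
  set S := Finset.range w ×ˢ Finset.range w with hS
  have hX := sum_card_filter_near_and_le (w := w) (ℓ := ℓ) (X := X)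
    (fun p hp => hfst p (Multiset.mem_add.2 (Or.inl hp)))
    (fun p hp => hsnd p (Multiset.mem_add.2 (Or.inl hp)))
  have hY := sum_card_filter_near_or_le (w := w) (ℓ := ℓ) (X := Y)
    (fun p hp => hfst p (Multiset.mem_add.2 (Or.inr hp)))
    (fun p hp => hsnd p (Multiset.mem_add.2 (Or.inr hp)))
  have hScard : (S.card : ℝ) = w * w := by simp [hS]
  have hw' : (w : ℝ) ≠ 0 := by positivity
  obtain ⟨⟨i, j⟩, hs, hXs, hYs⟩ := exists_le_and_le_of_sum_le (S := S)
    (f := fun s => ((X.filter fun p => NearGrid w ℓ δ p.1 s.1 ∧ NearGrid w ℓ δ p.2 s.2).card : ℝ))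
    (g := fun s => ((Y.filter fun p => NearGrid w ℓ δ p.1 s.1 ∨ NearGrid w ℓ δ p.2 s.2).card : ℝ))
    (a := 32 * ℓ ^ 2 / w ^ 2 * X.card) (b := 16 * ℓ / w * Y.card)
    ⟨(0, 0), by simp [hS, hw]⟩ (by positivity) (by positivity)
    (fun _ => by positivity) (fun _ => by positivity)
    (by
      rw [← Nat.cast_sum]
      refine (Nat.cast_le.2 hX).trans_eq ?_
      rw [hScard]
      push_cast
      field_simp
      ring)
    (by
      rw [← Nat.cast_sum]
      refine (Nat.cast_le.2 hY).trans_eq ?_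
      rw [hScard]
      push_cast
      field_simp
      ring)
  have hmem : ∀ k ∈ Finset.range w, δ + k ∈ Set.Icc (0 : ℝ) w := by
    intro k hk
    have hkw : ((k + 1 : ℕ) : ℝ) ≤ w := Nat.cast_le.2 (Finset.mem_range.1 hk)
    push_cast at hkw
    exact ⟨add_nonneg hδ.1 k.cast_nonneg, by linarith [hδ.2]⟩
  obtain ⟨hi, hj⟩ := Finset.mem_product.1 hs
  refine ⟨δ + i, δ + j, hmem i hi, hmem j hj, le_of_eq_of_le ?_ hXs, le_of_eq_of_le ?_ hYs⟩
  · exact congrArg _ (congrArg _ (Multiset.filter_congr fun p _ => by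
      simp only [NearGrid, max_le_iff, exists_and_left, exists_and_right]))
  · exact congrArg _ (congrArg _ (Multiset.filter_congr fun p _ => Iff.rfl))
end

section
/- Let p ∈ ℝ² and let ℓ, w be positive reals with w ≥ 4ℓ. Then the two-dimensional Lebesgue measure of the set of offsets (x,y) ∈ [0,w]² for which p is within ℓ∞-distance 2ℓ of some vertex of the width-w grid with origin (x,y) — i.e., for which there exist integers a, b with max(|p₁ − (x + aw)|, |p₂ − (y + bw)|) ≤ 2ℓ — is exactly 16ℓ². -/
open MeasureTheory

/-- Among the offsets in one period `[0, w]`, those for which `c` is within `r` of the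
lattice `x + wℤ` have measure `2r`, provided `2r ≤ w`. -/
theorem volume_offsets_near_lattice (c r w : ℝ) (hw : 0 < w) (hrw : 2 * r ≤ w) :
    volume {x : ℝ | x ∈ Set.Icc (0 : ℝ) w ∧ ∃ a : ℤ, |c - (x + a * w)| ≤ r}
      = ENNReal.ofReal (2 * r) := by
  have : Fact (0 < w) := ⟨hw⟩
  have hset : {x : ℝ | x ∈ Set.Icc (0 : ℝ) w ∧ ∃ a : ℤ, |c - (x + a * w)| ≤ r}
      = ((↑) : ℝ → AddCircle w) ⁻¹' Metric.closedBall (c : AddCircle w) r ∩ Set.Icc 0 w := by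
    ext x
    rw [AddCircle.coe_real_preimage_closedBall_eq_iUnion]
    simp only [Set.mem_ofPred_eq, Set.mem_inter_iff, Set.mem_iUnion, Metric.mem_closedBall,
      Real.dist_eq, zsmul_eq_mul]
    rw [and_comm, ← (Equiv.neg ℤ).exists_congr_right]
    refine and_congr_left fun _ => exists_congr fun a => ?_
    rw [abs_sub_comm]
    simp only [Equiv.neg_apply, Int.cast_neg]
    ring_nf
  rw [hset, ← measure_congr ((ae_eq_refl _).inter Ioc_ae_eq_Icc)]
  have h := AddCircle.add_projection_respects_measure (T := w) 0
    (Metric.isClosed_closedBall (x := (c : AddCircle w)) (ε := r)).measurableSet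
  rw [zero_add] at h
  rw [← h, AddCircle.volume_closedBall, min_eq_right hrw]

/-- For a fixed point `p ∈ ℝ²` and reals `0 < ℓ`, `0 < w` with `w ≥ 4ℓ`, the
set of offsets `(x,y) ∈ [0,w]²` for which `p` is within ℓ∞-distance `2ℓ` of
some vertex of the width-`w` grid with origin `(x,y)` has Lebesgue measure
exactly `16ℓ²`. -/
theorem measure_offsets_near_vertex (p : ℝ × ℝ) (ℓ w : ℝ)
    (hℓ : 0 < ℓ) (hw : 0 < w) (hwl : 4 * ℓ ≤ w) :
    volume {o : ℝ × ℝ | o.1 ∈ Set.Icc (0 : ℝ) w ∧ o.2 ∈ Set.Icc (0 : ℝ) w ∧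
        ∃ a b : ℤ, max |p.1 - (o.1 + a * w)| |p.2 - (o.2 + b * w)| ≤ 2 * ℓ}
      = ENNReal.ofReal (16 * ℓ ^ 2) := by
  have hset : {o : ℝ × ℝ | o.1 ∈ Set.Icc (0 : ℝ) w ∧ o.2 ∈ Set.Icc (0 : ℝ) w ∧
        ∃ a b : ℤ, max |p.1 - (o.1 + a * w)| |p.2 - (o.2 + b * w)| ≤ 2 * ℓ}
      = {x : ℝ | x ∈ Set.Icc (0 : ℝ) w ∧ ∃ a : ℤ, |p.1 - (x + a * w)| ≤ 2 * ℓ} ×ˢ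
        {y : ℝ | y ∈ Set.Icc (0 : ℝ) w ∧ ∃ b : ℤ, |p.2 - (y + b * w)| ≤ 2 * ℓ} := by
    ext o
    simp only [Set.mem_ofPred_eq, Set.mem_prod, max_le_iff, exists_and_left, exists_and_right]
    tauto
  have hrw : 2 * (2 * ℓ) ≤ w := by linarith
  rw [hset, Measure.volume_eq_prod, Measure.prod_prod,
    volume_offsets_near_lattice _ _ _ hw hrw, volume_offsets_near_lattice _ _ _ hw hrw,
    ← ENNReal.ofReal_mul (by positivity)]
  ring_nf
end

section
/- Let p ∈ ℝ² and let ℓ, w be positive reals with w ≥ 4ℓ. Then the two-dimensional Lebesgue measure of the set of offsets (x,y) ∈ [0,w]² for which p is within distance 2ℓ of some grid line of the width-w grid with origin (x,y) — i.e., for which there exists an integer a with |p₁ − (x + aw)| ≤ 2ℓ, or an integer b with |p₂ − (y + bw)| ≤ 2ℓ — is exactly w² − (w − 4ℓ)²; in particular this measure is strictly less than 8ℓw. -/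
open MeasureTheory

/-- The offsets `x` for which `c` is within distance `r` of a point of `x + wℤ`. -/
def nearOffsets (c w r : ℝ) : Set ℝ := {x | ∃ a : ℤ, |c - (x + a * w)| ≤ r}

theorem nearOffsets_eq_preimage_closedBall (c w r : ℝ) :
    nearOffsets c w r =
      (QuotientAddGroup.mk : ℝ → AddCircle w) ⁻¹' Metric.closedBall (c : AddCircle w) r := by
  rw [AddCircle.coe_real_preimage_closedBall_eq_iUnion]
  ext x
  simp only [nearOffsets, Set.mem_ofPred_eq, Set.mem_iUnion, Metric.mem_closedBall, Real.dist_eq,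
    zsmul_eq_mul]
  refine (Equiv.neg ℤ).exists_congr fun a => ?_
  rw [abs_sub_comm, Equiv.neg_apply, Int.cast_neg]
  ring_nf

theorem measurableSet_nearOffsets (c w r : ℝ) : MeasurableSet (nearOffsets c w r) := by
  rw [nearOffsets_eq_preimage_closedBall]
  exact AddCircle.measurable_mk' measurableSet_closedBall

theorem volume_nearOffsets_inter_Icc (c : ℝ) {w r : ℝ} (hw : 0 < w) (hr : 2 * r ≤ w) :
    volume (nearOffsets c w r ∩ Set.Icc 0 w) = ENNReal.ofReal (2 * r) := by
  have : Fact (0 < w) := ⟨hw⟩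
  have h := AddCircle.add_projection_respects_measure w 0
    (U := Metric.closedBall (c : AddCircle w) r) measurableSet_closedBall
  rw [AddCircle.volume_closedBall, min_eq_right hr, zero_add,
    ← nearOffsets_eq_preimage_closedBall] at h
  rw [h]
  exact measure_congr ((Filter.EventuallyEq.refl _ _).inter Ioc_ae_eq_Icc.symm)

theorem volume_Icc_sdiff_nearOffsets (c : ℝ) {w r : ℝ} (hw : 0 < w) (hr₀ : 0 ≤ r)
    (hr : 2 * r ≤ w) :
    volume (Set.Icc 0 w \ nearOffsets c w r) = ENNReal.ofReal (w - 2 * r) := by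
  rw [← Set.sdiff_inter_self_eq_sdiff, measure_sdiff Set.inter_subset_right
    ((measurableSet_nearOffsets c w r).inter measurableSet_Icc).nullMeasurableSet
    (by rw [volume_nearOffsets_inter_Icc c hw hr]; exact ENNReal.ofReal_ne_top),
    volume_nearOffsets_inter_Icc c hw hr, Real.volume_Icc, sub_zero,
    ENNReal.ofReal_sub _ (by positivity)]

theorem volume_square_near_grid (p : ℝ × ℝ) {w r : ℝ} (hw : 0 < w) (hr₀ : 0 ≤ r)
    (hr : 2 * r ≤ w) :
    volume {o : ℝ × ℝ | o.1 ∈ Set.Icc (0 : ℝ) w ∧ o.2 ∈ Set.Icc (0 : ℝ) w ∧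
        ((∃ a : ℤ, |p.1 - (o.1 + a * w)| ≤ r) ∨ (∃ b : ℤ, |p.2 - (o.2 + b * w)| ≤ r))}
      = ENNReal.ofReal (w ^ 2 - (w - 2 * r) ^ 2) := by
  have hset : {o : ℝ × ℝ | o.1 ∈ Set.Icc (0 : ℝ) w ∧ o.2 ∈ Set.Icc (0 : ℝ) w ∧
        ((∃ a : ℤ, |p.1 - (o.1 + a * w)| ≤ r) ∨ (∃ b : ℤ, |p.2 - (o.2 + b * w)| ≤ r))}
      = Set.Icc 0 w ×ˢ Set.Icc 0 w \
        (Set.Icc 0 w \ nearOffsets p.1 w r) ×ˢ (Set.Icc 0 w \ nearOffsets p.2 w r) := by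
    ext o
    change (_ ∧ _ ∧ (o.1 ∈ nearOffsets p.1 w r ∨ o.2 ∈ nearOffsets p.2 w r)) ↔ _
    simp only [Set.mem_sdiff, Set.mem_prod]
    tauto
  have hfar : volume ((Set.Icc 0 w \ nearOffsets p.1 w r) ×ˢ (Set.Icc 0 w \ nearOffsets p.2 w r))
      = ENNReal.ofReal ((w - 2 * r) ^ 2) := by
    rw [Measure.volume_eq_prod, Measure.prod_prod, volume_Icc_sdiff_nearOffsets _ hw hr₀ hr,
      volume_Icc_sdiff_nearOffsets _ hw hr₀ hr, ← ENNReal.ofReal_mul (by linarith), sq]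
  have hsquare : volume (Set.Icc (0 : ℝ) w ×ˢ Set.Icc (0 : ℝ) w) = ENNReal.ofReal (w ^ 2) := by
    rw [Measure.volume_eq_prod, Measure.prod_prod, Real.volume_Icc, sub_zero,
      ← ENNReal.ofReal_mul hw.le, sq]
  rw [hset, measure_sdiff (Set.prod_mono Set.sdiff_subset Set.sdiff_subset)
    ((measurableSet_Icc.diff (measurableSet_nearOffsets _ _ _)).prod
      (measurableSet_Icc.diff (measurableSet_nearOffsets _ _ _))).nullMeasurableSet
    (by rw [hfar]; exact ENNReal.ofReal_ne_top), hfar, hsquare, ENNReal.ofReal_sub _ (sq_nonneg _)]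

/-- For a fixed point `p ∈ ℝ²` and reals `0 < ℓ`, `0 < w` with `w ≥ 4ℓ`, the
set of offsets `(x,y) ∈ [0,w]²` for which `p` is within distance `2ℓ` of some
grid line of the width-`w` grid with origin `(x,y)` has Lebesgue measure
exactly `w² − (w − 4ℓ)²`, which is strictly less than `8ℓw`. -/
theorem measure_offsets_near_edge (p : ℝ × ℝ) (ℓ w : ℝ)
    (hℓ : 0 < ℓ) (hw : 0 < w) (hwl : 4 * ℓ ≤ w) :
    volume {o : ℝ × ℝ | o.1 ∈ Set.Icc (0 : ℝ) w ∧ o.2 ∈ Set.Icc (0 : ℝ) w ∧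
        ((∃ a : ℤ, |p.1 - (o.1 + a * w)| ≤ 2 * ℓ) ∨
         (∃ b : ℤ, |p.2 - (o.2 + b * w)| ≤ 2 * ℓ))}
      = ENNReal.ofReal (w ^ 2 - (w - 4 * ℓ) ^ 2) ∧
    volume {o : ℝ × ℝ | o.1 ∈ Set.Icc (0 : ℝ) w ∧ o.2 ∈ Set.Icc (0 : ℝ) w ∧
        ((∃ a : ℤ, |p.1 - (o.1 + a * w)| ≤ 2 * ℓ) ∨
         (∃ b : ℤ, |p.2 - (o.2 + b * w)| ≤ 2 * ℓ))}
      < ENNReal.ofReal (8 * ℓ * w) := by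
  have h := volume_square_near_grid p hw (r := 2 * ℓ) (by positivity) (by linarith)
  rw [show 2 * (2 * ℓ) = 4 * ℓ by ring] at h
  refine ⟨h, ?_⟩
  rw [h, ENNReal.ofReal_lt_ofReal_iff (by positivity)]
  nlinarith [mul_pos hℓ hℓ]
end

section
/- (Separator Lemma) Let ℓ be a positive real number, let n ≥ 10 be an integer, and let V be a 2D-embedded set of n points in ℝ² (pairwise Euclidean distances all at least 1). Then there exist two parallel lines, either both vertical (of the form x = c₁ and x = c₂ with c₁ < c₂) or both horizontal (y = c₁ and y = c₂ with c₁ < c₂), such that: (i) c₂ − c₁ ≥ ℓ; (ii) the open strip strictly between the two lines contains at most 8ℓ√n points of V; (iii) each of the two open regions on the outer sides of the lines contains at most 9n/10 points of V; and (iv) no point of V lies on either line. -/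
open scoped Classical

/-- A weak quantile: some level `a` has fewer than `r` values strictly below it and at least `r`
values at or below it. -/
lemma exists_quantile {α : Type*} (V : Finset α) (f : α → ℝ) {r : ℝ} (hr : 0 < r)
    (hrV : r ≤ V.card) :
    ∃ a : ℝ, ((V.filter (fun p => f p < a)).card : ℝ) < r ∧
      r ≤ ((V.filter (fun p => f p ≤ a)).card : ℝ) := by
  have hne : V.Nonempty := by
    rw [← Finset.card_pos]
    exact_mod_cast hr.trans_le hrV
  obtain ⟨M, hM, hMmax⟩ := V.exists_max_image f hne
  have hne' : (V.filter (fun p => r ≤ ((V.filter (fun q => f q ≤ f p)).card : ℝ))).Nonempty := by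
    refine ⟨M, Finset.mem_filter.2 ⟨hM, ?_⟩⟩
    rwa [Finset.filter_true_of_mem hMmax]
  obtain ⟨m, hm, hmin⟩ := Finset.exists_min_image _ f hne'
  refine ⟨f m, ?_, (Finset.mem_filter.1 hm).2⟩
  by_contra! hcon
  have hlow : (V.filter (fun p => f p < f m)).Nonempty := by
    rw [← Finset.card_pos]
    exact_mod_cast hr.trans_le hcon
  obtain ⟨v, hv, hvmax⟩ := Finset.exists_max_image _ f hlow
  obtain ⟨hvV, hvm⟩ := Finset.mem_filter.1 hv
  refine (hmin v (Finset.mem_filter.2 ⟨hvV, hcon.trans ?_⟩)).not_gt hvm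
  exact_mod_cast Finset.card_le_card fun p hp =>
    Finset.mem_filter.2 ⟨(Finset.mem_filter.1 hp).1, hvmax p hp⟩

lemma abs_sub_lt_one_of_natFloor_eq {x y : ℝ} (hx : 0 ≤ x) (hy : 0 ≤ y) (h : ⌊x⌋₊ = ⌊y⌋₊) :
    |x - y| < 1 := by
  have h1 := Nat.floor_le hx
  have h2 := Nat.lt_floor_add_one x
  have h3 := Nat.floor_le hy
  have h4 := Nat.lt_floor_add_one y
  rw [h] at h1 h2
  rw [abs_lt]
  constructor <;> linarith

/-- A set of points with pairwise distances at least `1` inside an axis-parallel box with sides at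
most `w` has at most `(√2 w + 1)²` points. -/
lemma card_le_of_subset_box (S : Finset (EuclideanSpace ℝ (Fin 2)))
    (hS : ∀ p ∈ S, ∀ q ∈ S, p ≠ q → 1 ≤ dist p q) (a : Fin 2 → ℝ) {w : ℝ} (hw : 0 ≤ w)
    (hbox : ∀ p ∈ S, ∀ i, a i ≤ p i ∧ p i ≤ a i + w) :
    (S.card : ℝ) ≤ (√2 * w + 1) ^ 2 := by
  set K : ℕ := ⌊√2 * w⌋₊ + 1 with hK
  let cell : EuclideanSpace ℝ (Fin 2) → ℕ × ℕ :=
    fun p => (⌊√2 * (p 0 - a 0)⌋₊, ⌊√2 * (p 1 - a 1)⌋₊)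
  have hmaps : ∀ p ∈ S, cell p ∈ Finset.range K ×ˢ Finset.range K := by
    intro p hp
    have key : ∀ i, ⌊√2 * (p i - a i)⌋₊ < K := fun i => by
      refine Nat.lt_succ_of_le (Nat.floor_le_floor ?_)
      have := (hbox p hp i).2
      gcongr
      linarith
    simp [cell, key]
  have hinj : ∀ p ∈ S, ∀ q ∈ S, cell p = cell q → p = q := by
    intro p hp q hq h
    by_contra hne
    have hnonneg : ∀ x ∈ S, ∀ i, 0 ≤ √2 * (x i - a i) := fun x hx i =>
      mul_nonneg (Real.sqrt_nonneg 2) (sub_nonneg.2 (hbox x hx i).1)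
    have hsq : ∀ i, ⌊√2 * (p i - a i)⌋₊ = ⌊√2 * (q i - a i)⌋₊ → 2 * (p i - q i) ^ 2 < 1 := by
      intro i hi
      have h1 := abs_sub_lt_one_of_natFloor_eq (hnonneg p hp i) (hnonneg q hq i) hi
      rw [← sq_lt_one_iff_abs_lt_one] at h1
      have h2 : √2 ^ 2 = 2 := Real.sq_sqrt (by norm_num)
      calc 2 * (p i - q i) ^ 2 = (√2 * (p i - a i) - √2 * (q i - a i)) ^ 2 := by
            linear_combination -(p i - q i) ^ 2 * h2
        _ < 1 := h1
    have h0 := hsq 0 (Prod.ext_iff.1 h).1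
    have h1 := hsq 1 (Prod.ext_iff.1 h).2
    have hd := hS p hp q hq hne
    rw [EuclideanSpace.dist_eq, Real.one_le_sqrt, Fin.sum_univ_two, Real.dist_eq, Real.dist_eq,
      sq_abs, sq_abs] at hd
    linarith
  have hcard : S.card ≤ K * K := by
    simpa using Finset.card_le_card_of_injOn cell hmaps hinj
  have hKle : (K : ℝ) ≤ √2 * w + 1 := by
    rw [hK]
    push_cast
    have := Nat.floor_le (mul_nonneg (Real.sqrt_nonneg 2) hw)
    linarith
  calc (S.card : ℝ) ≤ (K : ℝ) * K := by exact_mod_cast hcard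
    _ ≤ (√2 * w + 1) ^ 2 := by rw [sq]; gcongr

/-- If `a ≤ b`, one of the strips of width `ℓ` whose left end is at most `b` and whose right end is
at least `a` has few values inside and none on its boundary. -/
lemma exists_sparse_strip {α : Type*} (V : Finset α) (f : α → ℝ) {ℓ a b : ℝ} (hℓ : 0 < ℓ)
    (hab : a ≤ b) :
    ∃ c : ℝ, c ≤ b ∧ a ≤ c + ℓ ∧
      ((V.filter (fun p => c < f p ∧ f p < c + ℓ)).card : ℝ) * (b - a) ≤ V.card * ℓ ∧
      ∀ p ∈ V, f p ≠ c ∧ f p ≠ c + ℓ := by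
  set m : ℕ := ⌊(b - a) / ℓ⌋₊ + 1 with hm
  have hfloor : (⌊(b - a) / ℓ⌋₊ : ℝ) * ℓ ≤ b - a :=
    (le_div_iff₀ hℓ).1 (Nat.floor_le (div_nonneg (sub_nonneg.2 hab) hℓ.le))
  have hmℓ : b - a ≤ m * ℓ := by
    rw [← div_le_iff₀ hℓ, hm]
    exact_mod_cast (Nat.lt_floor_add_one _).le
  have hmpos : (0 : ℝ) < m := by
    rw [hm]
    positivity
  obtain ⟨t, ht, htavoid⟩ := (Set.Icc_infinite (sub_lt_self a hℓ)).exists_notMem_finset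
    ((V ×ˢ Finset.range (m + 1)).image fun x => f x.1 - x.2 * ℓ)
  have havoid : ∀ p ∈ V, ∀ j ≤ m, f p ≠ t + j * ℓ := by
    intro p hp j hj h
    refine htavoid (Finset.mem_image.2 ⟨(p, j), ?_, by simp [h]⟩)
    simp only [Finset.mem_product, Finset.mem_range]
    exact ⟨hp, by omega⟩
  obtain ⟨j, hj, hfiber⟩ := Finset.exists_card_fiber_le_of_card_le_nsmul
    (s := V) (t := Finset.range m) (f := fun p => ⌊(f p - t) / ℓ⌋₊) (b := (V.card : ℝ) / m)
    (by simp [hm]) (by rw [Finset.card_range, nsmul_eq_mul, mul_div_cancel₀ _ hmpos.ne'])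
  rw [Finset.mem_range] at hj
  have hjle : (j : ℝ) ≤ ⌊(b - a) / ℓ⌋₊ := by exact_mod_cast Nat.le_of_lt_succ hj
  have hjℓ : (j : ℝ) * ℓ ≤ b - a := (mul_le_mul_of_nonneg_right hjle hℓ.le).trans hfloor
  refine ⟨t + j * ℓ, by linarith [ht.2], ?_, ?_, fun p hp => ⟨havoid p hp j hj.le, ?_⟩⟩
  · have : 0 ≤ (j : ℝ) * ℓ := by positivity
    linarith [ht.1]
  · have hsub : (V.filter (fun p => t + j * ℓ < f p ∧ f p < t + j * ℓ + ℓ)).card ≤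
        (V.filter (fun p => ⌊(f p - t) / ℓ⌋₊ = j)).card := by
      refine Finset.card_le_card fun p hp => ?_
      obtain ⟨hpV, h1, h2⟩ := Finset.mem_filter.1 hp
      refine Finset.mem_filter.2 ⟨hpV, ?_⟩
      have h3 : (j : ℝ) ≤ (f p - t) / ℓ := by
        rw [le_div_iff₀ hℓ]
        linarith
      rw [Nat.floor_eq_iff ((Nat.cast_nonneg j).trans h3), div_lt_iff₀ hℓ]
      exact ⟨h3, by linarith⟩
    calc _ ≤ (V.card : ℝ) / m * (m * ℓ) := by
          refine mul_le_mul (le_trans ?_ hfiber) hmℓ (sub_nonneg.2 hab) (by positivity)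
          exact_mod_cast hsub
      _ = V.card * ℓ := by field_simp
  · have := havoid p hp (j + 1) hj
    push_cast at this
    rwa [add_mul, one_mul, ← add_assoc] at this

/-- **Separator Lemma.** For any positive real `ℓ`, integer `n ≥ 10`, and
2D-embedded set `V` of `n` points in ℝ², there are two parallel axis-aligned
lines (both orthogonal to coordinate `i`) at positions `c₁ < c₂` with
`c₂ - c₁ ≥ ℓ`, such that the open strip between them contains at most `8ℓ√n`
points of `V`, each outer open region contains at most `9n/10` points of `V`,
and no point of `V` lies on either line. -/
theorem separator_lemma (ℓ : ℝ) (hℓ : 0 < ℓ) (n : ℕ) (hn : 10 ≤ n)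
    (V : Finset (EuclideanSpace ℝ (Fin 2))) (hcard : V.card = n)
    (hV : ∀ p ∈ V, ∀ q ∈ V, p ≠ q → 1 ≤ dist p q) :
    ∃ (i : Fin 2) (c₁ c₂ : ℝ), c₁ < c₂ ∧ ℓ ≤ c₂ - c₁ ∧
      ((V.filter (fun p => c₁ < p i ∧ p i < c₂)).card : ℝ) ≤ 8 * ℓ * Real.sqrt n ∧
      ((V.filter (fun p => p i < c₁)).card : ℝ) ≤ 9 * n / 10 ∧
      ((V.filter (fun p => c₂ < p i)).card : ℝ) ≤ 9 * n / 10 ∧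
      (∀ p ∈ V, p i ≠ c₁ ∧ p i ≠ c₂) := by
  have hn' : (10 : ℝ) ≤ n := by exact_mod_cast hn
  have hr : (0 : ℝ) < n / 10 := by linarith
  have hrV : (n : ℝ) / 10 ≤ V.card := by
    rw [hcard]
    linarith
  choose a ha ha' using fun i : Fin 2 => exists_quantile V (fun p => p i) hr hrV
  choose b hb hb' using fun i : Fin 2 => exists_quantile V (fun p => -p i) hr hrV
  have hsplit : ∀ (P : EuclideanSpace ℝ (Fin 2) → Prop) [DecidablePred P]
      [∀ p, Decidable (¬ P p)],
      ((V.filter P).card : ℝ) + (V.filter (fun p => ¬ P p)).card = n := fun P _ _ => by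
    rw [← hcard]
    exact_mod_cast Finset.card_filter_add_card_filter_not P
  set S := V.filter (fun p => ∀ i, a i ≤ p i ∧ p i ≤ -b i)
  have hScard : 6 * (n : ℝ) / 10 < S.card := by
    have hcover : V.filter (fun p => ¬ ∀ i, a i ≤ p i ∧ p i ≤ -b i) ⊆
        (V.filter (fun p => p 0 < a 0) ∪ V.filter (fun p => -p 0 < b 0)) ∪
        (V.filter (fun p => p 1 < a 1) ∪ V.filter (fun p => -p 1 < b 1)) := by
      intro p hp
      simp only [Finset.mem_filter, Finset.mem_union, Fin.forall_fin_two] at hp ⊢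
      obtain ⟨hpV, hp⟩ := hp
      simp only [hpV, true_and]
      by_contra! h
      exact hp ⟨⟨h.1.1, by linarith [h.1.2]⟩, ⟨h.2.1, by linarith [h.2.2]⟩⟩
    have hle := (Finset.card_le_card hcover).trans ((Finset.card_union_le _ _).trans
      (add_le_add (Finset.card_union_le _ _) (Finset.card_union_le _ _)))
    have hle' : ((V.filter (fun p => ¬ ∀ i, a i ≤ p i ∧ p i ≤ -b i)).card : ℝ) ≤ _ :=
      Nat.cast_le.2 hle
    push_cast at hle'
    have := hsplit (fun p => ∀ i, a i ≤ p i ∧ p i ≤ -b i)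
    linarith [ha 0, ha 1, hb 0, hb 1]
  have hsqrt : √(n : ℝ) ^ 2 = n := Real.sq_sqrt (Nat.cast_nonneg n)
  have hsqrt3 : 3 ≤ √(n : ℝ) := Real.le_sqrt_of_sq_le (by linarith)
  obtain ⟨i, hi⟩ : ∃ i, √(n : ℝ) ≤ 8 * (-b i - a i) := by
    by_contra! hcon
    have hpack := card_le_of_subset_box S
      (fun p hp q hq => hV p (Finset.mem_filter.1 hp).1 q (Finset.mem_filter.1 hq).1)
      a (w := √(n : ℝ) / 8) (by positivity) (fun p hp i => by
        have hpi := (Finset.mem_filter.1 hp).2 i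
        exact ⟨hpi.1, by linarith [hpi.2, hcon i]⟩)
    have h2 : √2 ≤ 3 / 2 := Real.sqrt_le_iff.2 (by norm_num)
    have hside : √2 * (√(n : ℝ) / 8) + 1 ≤ 3 / 4 * √(n : ℝ) := by nlinarith
    have : (√2 * (√(n : ℝ) / 8) + 1) ^ 2 ≤ (3 / 4 * √(n : ℝ)) ^ 2 := by gcongr
    nlinarith
  obtain ⟨c, hcb, hac, hstrip, havoid⟩ :=
    exists_sparse_strip V (fun p => p i) hℓ (show a i ≤ -b i by linarith)
  refine ⟨i, c, c + ℓ, by linarith, by linarith, ?_, ?_, ?_, havoid⟩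
  · rw [hcard] at hstrip
    set k := ((V.filter (fun p => c < p i ∧ p i < c + ℓ)).card : ℝ)
    have hk : 0 ≤ k := Nat.cast_nonneg _
    have hmul : k * √(n : ℝ) ≤ 8 * ℓ * √(n : ℝ) * √(n : ℝ) := by nlinarith
    exact le_of_mul_le_mul_right hmul (by linarith)
  · have hle : ((V.filter (fun p => -p i ≤ b i)).card : ℝ) ≤
        (V.filter (fun p => ¬ p i < c)).card := by
      refine Nat.cast_le.2 (Finset.card_le_card fun p hp => ?_)
      simp only [Finset.mem_filter, not_lt] at hp ⊢
      exact ⟨hp.1, by linarith [hp.2]⟩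
    linarith [hsplit (fun p => p i < c), hb' i]
  · have hle : ((V.filter (fun p => p i ≤ a i)).card : ℝ) ≤
        (V.filter (fun p => ¬ c + ℓ < p i)).card := by
      refine Nat.cast_le.2 (Finset.card_le_card fun p hp => ?_)
      simp only [Finset.mem_filter, not_lt] at hp ⊢
      exact ⟨hp.1, by linarith [hp.2]⟩
    linarith [hsplit (fun p => c + ℓ < p i), ha' i]
end

section
/- Let n ≥ 10 be an integer, let V be a finite set of n points in ℝ², let ℓ be a real with 0 < ℓ ≤ √n/8, and let a₁ < a₂ be reals with a₂ − a₁ > √(n/10). Then there exist reals a₁′, a₂′ with a₁ ≤ a₁′ < a₂′ ≤ a₂ and a₂′ − a₁′ ≥ ℓ such that at most 8ℓ√n points (x,y) ∈ V satisfy a₁′ ≤ x ≤ a₂′. -/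
open scoped Classical

/-- Given a finite set `V` of `n ≥ 10` points in ℝ², a real `0 < ℓ ≤ √n / 8`,
and reals `a₁ < a₂` with `a₂ − a₁ > √(n/10)`, there is a vertical strip
`[a₁′, a₂′] ⊆ [a₁, a₂]` of width at least `ℓ` containing at most `8ℓ√n`
points of `V`. -/
theorem sparse_strip_exists (n : ℕ) (hn : 10 ≤ n)
    (V : Finset (ℝ × ℝ)) (hcard : V.card = n)
    (ℓ : ℝ) (hℓ0 : 0 < ℓ) (hℓ : ℓ ≤ Real.sqrt n / 8)
    (a₁ a₂ : ℝ) (ha : a₁ < a₂) (hgap : Real.sqrt ((n : ℝ) / 10) < a₂ - a₁) :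
    ∃ a₁' a₂' : ℝ, a₁ ≤ a₁' ∧ a₁' < a₂' ∧ a₂' ≤ a₂ ∧ ℓ ≤ a₂' - a₁' ∧
      ((V.filter (fun p => a₁' ≤ p.1 ∧ p.1 ≤ a₂')).card : ℝ)
        ≤ 8 * ℓ * Real.sqrt n := by
  by_contra! hdense
  set s := Real.sqrt n with hs
  have hn0 : (0 : ℝ) < n := by exact_mod_cast (by omega : 0 < n)
  have hs0 : 0 < s := Real.sqrt_pos.mpr hn0
  have hss : s * s = n := Real.mul_self_sqrt hn0.le
  have hquarter : s / 4 ≤ Real.sqrt ((n : ℝ) / 10) := by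
    apply Real.le_sqrt_of_sq_le
    nlinarith
  obtain ⟨k, hk⟩ : ∃ k : ℕ, k = ⌈s / (8 * ℓ)⌉₊ := ⟨_, rfl⟩
  have hkpos : 0 < k := hk ▸ Nat.ceil_pos.mpr (by positivity)
  have hk0 : (0 : ℝ) < k := by exact_mod_cast hkpos
  have hk_lower : s ≤ k * (8 * ℓ) := by
    rw [← div_le_iff₀ (by positivity), hk]
    exact Nat.le_ceil _
  have hk_upper : k * ℓ < s / 8 + ℓ := by
    have h : (k : ℝ) < s / (8 * ℓ) + 1 := hk ▸ Nat.ceil_lt_add_one (by positivity)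
    calc k * ℓ < (s / (8 * ℓ) + 1) * ℓ := by gcongr
      _ = s / 8 + ℓ := by field_simp
  -- The `k` strips of width `ℓ` start at multiples of `d > ℓ`, hence are pairwise disjoint.
  set d := (a₂ - a₁) / k with hd
  have hkd : k * d = a₂ - a₁ := by rw [hd]; field_simp
  have hℓd : ℓ < d := by
    rw [hd, lt_div_iff₀ hk0]
    linarith
  let strip : ℕ → Finset (ℝ × ℝ) := fun i =>
    V.filter (fun p => a₁ + i * d ≤ p.1 ∧ p.1 ≤ a₁ + i * d + ℓ)
  have hstep : ∀ {i j : ℕ}, i < j → (i : ℝ) * d + d ≤ j * d := by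
    intro i j hij
    have h : (i : ℝ) + 1 ≤ j := by exact_mod_cast hij
    nlinarith
  have hstrip : ∀ i ∈ Finset.range k, 8 * ℓ * s < ((strip i).card : ℝ) := by
    intro i hi
    have hid := hstep (Finset.mem_range.mp hi)
    have hid0 : 0 ≤ (i : ℝ) * d := mul_nonneg i.cast_nonneg (by linarith)
    exact hdense _ _ (by linarith) (by linarith) (by linarith) (by linarith)
  have hdisj : ((Finset.range k : Finset ℕ) : Set ℕ).PairwiseDisjoint strip := by
    intro i _ j _ hij
    refine Finset.disjoint_left.mpr fun p hpi hpj => ?_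
    obtain ⟨-, hi₁, hi₂⟩ := Finset.mem_filter.mp hpi
    obtain ⟨-, hj₁, hj₂⟩ := Finset.mem_filter.mp hpj
    rcases lt_or_gt_of_ne hij with h | h <;> linarith [hstep h]
  have htotal : ∑ i ∈ Finset.range k, ((strip i).card : ℝ) ≤ n := by
    have h : ∑ i ∈ Finset.range k, (strip i).card ≤ n := by
      rw [← Finset.card_biUnion hdisj, ← hcard]
      exact Finset.card_le_card (Finset.biUnion_subset.mpr fun i _ => Finset.filter_subset _ _)
    exact_mod_cast h
  have hsum : k * (8 * ℓ * s) < ∑ i ∈ Finset.range k, ((strip i).card : ℝ) := by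
    have h := Finset.sum_lt_sum_of_nonempty (Finset.nonempty_range_iff.mpr hkpos.ne') hstrip
    simpa using h
  nlinarith
end
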